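/- For all sufficiently large n, if f:{0,1}^n→{0,1} is a nontrivial symmetric Boolean function, then the rank over the reals of the XOR-function matrix M_F satisfies rank(M_F) ≥ C(n, ⌈n/8⌉); in particular rank(M_F) ≥ 2^{n/8}. -/

import Mathlib

/-!
The Walsh characters `x ↦ (-1)^{x·w}` are eigenvectors of the XOR matrix of `f`, with eigenvalues
`2^n f̃(w)`, so its rank is the number of nonzero Fourier coefficients. For symmetric `f` these depend
only on the weight of `w`; hence one nonzero coefficient at a weight `k` with `m ≤ k ≤ n - m`,
`m = ⌈n/8⌉`, gives rank at least `C(n, k) ≥ C(n, m)`.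

Suppose all those middle coefficients vanish, and write `f x = φ |x|`. Let `q` satisfy
`m ≤ q` and `2q + a ≤ n`. Group the first `2q` coordinates in pairs and set both members of a
pair to the same bit `b_j`, the remaining coordinates being fixed with `a` ones. In the Fourier
expansion of the alternating sum `∑_b (-1)^{|b|} f`, the character of `w` contributes `0` unless `w`
takes two different values on every pair, which forces `q ≤ |w| ≤ n - q`; so the alternating sum
is zero (`alternating_sum_eq_zero`), that is, `∑_j (-1)^j C(q, j) φ(a + 2j) = 0`.
Take `q = p - 1` with `p` a prime in `(m, 2m]` (Bertrand). As `(-1)^j C(p-1, j) ≡ 1 (mod p)`, the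
number of `j < p` with `φ(a + 2j)` true is divisible by `p`, so it is `0` or `p`, and `φ` is constant
along `a, a + 2, …, a + 2(p-1)`. Sliding `a` shows that `φ k` depends only on the parity of `k`,
which leaves exactly the four trivial functions.
-/


namespace SymXOR

/-- Hamming weight of a Boolean vector. -/
def hammingWeight {n : ℕ} (x : Fin n → Bool) : ℕ :=
  (Finset.univ.filter fun i => x i = true).card

/-- The inner product `x·w = Σ_i x_i w_i` of two Boolean vectors. -/
def dotProd {n : ℕ} (x w : Fin n → Bool) : ℕ :=
  (Finset.univ.filter fun i => x i = true ∧ w i = true).card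

/-- A Boolean value viewed as a real number. -/
noncomputable def boolToReal (b : Bool) : ℝ := if b then 1 else 0

/-- The Fourier coefficient `f̃(w) = 2^{-n} Σ_x (-1)^{x·w} f(x)`. -/
noncomputable def fourierCoeff {n : ℕ} (f : (Fin n → Bool) → Bool) (w : Fin n → Bool) : ℝ :=
  (1 / 2 ^ n) * ∑ x : Fin n → Bool, (-1 : ℝ) ^ dotProd x w * boolToReal (f x)

/-- The XOR-function matrix `M_F[x,y] = f(x ⊕ y)`, as a real matrix. -/
noncomputable def xorMatrix {n : ℕ} (f : (Fin n → Bool) → Bool) :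
    Matrix (Fin n → Bool) (Fin n → Bool) ℝ :=
  Matrix.of fun x y => boolToReal (f fun i => xor (x i) (y i))

open Finset

/-! ### Walsh characters and the Fourier transform -/

theorem dotProd_comm {n : ℕ} (x w : Fin n → Bool) : dotProd x w = dotProd w x := by
  simp only [dotProd, and_comm]

theorem neg_one_pow_dotProd {n : ℕ} (x w : Fin n → Bool) :
    (-1 : ℝ) ^ dotProd x w = ∏ i, if x i = true ∧ w i = true then (-1 : ℝ) else 1 := by
  rw [dotProd, Finset.prod_ite]
  simp

theorem neg_one_pow_dotProd_xor {n : ℕ} (x y w : Fin n → Bool) :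
    (-1 : ℝ) ^ dotProd (fun i => xor (x i) (y i)) w
      = (-1 : ℝ) ^ dotProd x w * (-1 : ℝ) ^ dotProd y w := by
  simp only [neg_one_pow_dotProd, ← Finset.prod_mul_distrib]
  refine Finset.prod_congr rfl fun i _ => ?_
  cases x i <;> cases y i <;> cases w i <;> norm_num

theorem character_orthogonality {n : ℕ} (x y : Fin n → Bool) :
    ∑ w : Fin n → Bool, (-1 : ℝ) ^ dotProd x w * (-1 : ℝ) ^ dotProd y w
      = if x = y then (2 : ℝ) ^ n else 0 := by
  have h : ∀ w : Fin n → Bool, (-1 : ℝ) ^ dotProd x w * (-1 : ℝ) ^ dotProd y w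
      = ∏ i, (fun (i : Fin n) (b : Bool) =>
        if xor (x i) (y i) = true ∧ b = true then (-1 : ℝ) else 1) i (w i) := by
    intro w
    rw [← neg_one_pow_dotProd_xor, neg_one_pow_dotProd]
  rw [Finset.sum_congr rfl fun w _ => h w]
  refine (Fintype.prod_sum (fun (i : Fin n) (b : Bool) =>
    if xor (x i) (y i) = true ∧ b = true then (-1 : ℝ) else 1)).symm.trans ?_
  split_ifs with hxy
  · subst hxy
    simp
  · obtain ⟨i, hi⟩ := Function.ne_iff.mp hxy
    refine Finset.prod_eq_zero (Finset.mem_univ i) ?_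
    revert hi
    cases x i <;> cases y i <;> simp

theorem fourier_inversion {n : ℕ} (f : (Fin n → Bool) → Bool) (x : Fin n → Bool) :
    boolToReal (f x) = ∑ w, fourierCoeff f w * (-1 : ℝ) ^ dotProd x w := by
  simp only [fourierCoeff, Finset.mul_sum, Finset.sum_mul]
  rw [Finset.sum_comm]
  have h : ∀ y : Fin n → Bool, ∑ w : Fin n → Bool,
      1 / 2 ^ n * ((-1 : ℝ) ^ dotProd y w * boolToReal (f y)) * (-1 : ℝ) ^ dotProd x w
      = (1 / 2 ^ n * boolToReal (f y)) * if y = x then (2 : ℝ) ^ n else 0 := by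
    intro y
    rw [← character_orthogonality, Finset.mul_sum]
    exact Finset.sum_congr rfl fun w _ => by ring
  rw [Finset.sum_congr rfl fun y _ => h y]
  simp only [mul_ite, mul_zero, Finset.sum_ite_eq', Finset.mem_univ, if_true]
  field_simp

/-- The `2^n × 2^n` Walsh–Hadamard matrix, with entries `(-1)^{x·w}`. -/
noncomputable def walshMatrix (n : ℕ) : Matrix (Fin n → Bool) (Fin n → Bool) ℝ :=
  Matrix.of fun x w => (-1 : ℝ) ^ dotProd x w

/-- Conjugation by the Walsh–Hadamard matrix diagonalizes the XOR matrix. -/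
theorem walsh_mul_xorMatrix_mul_walsh {n : ℕ} (f : (Fin n → Bool) → Bool) :
    walshMatrix n * (xorMatrix f * walshMatrix n)
      = Matrix.diagonal fun w => (2 : ℝ) ^ n * (2 ^ n * fourierCoeff f w) := by
  have h1 : ∀ x w, (xorMatrix f * walshMatrix n) x w
      = (-1 : ℝ) ^ dotProd x w * (2 ^ n * fourierCoeff f w) := by
    intro x w
    have hinv : Function.Involutive fun (y : Fin n → Bool) (i : Fin n) => xor (x i) (y i) := by
      intro y; funext i; simp
    rw [Matrix.mul_apply, ← hinv.bijective.sum_comp]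
    simp only [fourierCoeff, xorMatrix, walshMatrix, Matrix.of_apply, neg_one_pow_dotProd_xor]
    have : (2 : ℝ) ^ n * (1 / 2 ^ n * ∑ y, (-1 : ℝ) ^ dotProd y w * boolToReal (f y))
        = ∑ y, (-1 : ℝ) ^ dotProd y w * boolToReal (f y) := by
      field_simp
    rw [this, Finset.mul_sum]
    refine Finset.sum_congr rfl fun y _ => ?_
    have hy : (fun i => xor (x i) (xor (x i) (y i))) = y := hinv y
    rw [hy]
    ring
  ext v w
  rw [Matrix.mul_apply]
  simp only [h1]
  simp only [walshMatrix, Matrix.of_apply, ← mul_assoc, ← Finset.sum_mul]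
  have h2 : ∑ x : Fin n → Bool, (-1 : ℝ) ^ dotProd v x * (-1 : ℝ) ^ dotProd x w
      = if v = w then (2 : ℝ) ^ n else 0 := by
    rw [← character_orthogonality]
    exact Finset.sum_congr rfl fun x _ => by rw [dotProd_comm x w]
  rw [h2, Matrix.diagonal_apply]
  split_ifs with hvw
  · rw [hvw, mul_assoc]
  · simp

theorem card_support_le_rank {n : ℕ} (f : (Fin n → Bool) → Bool) :
    (univ.filter fun w => fourierCoeff f w ≠ 0).card ≤ (xorMatrix f).rank := by
  classical
  calc (univ.filter fun w => fourierCoeff f w ≠ 0).card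
      = (Matrix.diagonal fun w => (2 : ℝ) ^ n * (2 ^ n * fourierCoeff f w)).rank := by
        rw [Matrix.rank_diagonal, Fintype.card_subtype]
        congr 1
        ext w
        simp
    _ = (walshMatrix n * (xorMatrix f * walshMatrix n)).rank := by
        rw [walsh_mul_xorMatrix_mul_walsh]
    _ ≤ (xorMatrix f * walshMatrix n).rank := Matrix.rank_mul_le_right _ _
    _ ≤ (xorMatrix f).rank := Matrix.rank_mul_le_left _ _

/-! ### Symmetric functions -/

theorem exists_perm_of_hammingWeight_eq {n : ℕ} {v w : Fin n → Bool}
    (h : hammingWeight v = hammingWeight w) : ∃ σ : Equiv.Perm (Fin n), ∀ i, w (σ i) = v i := by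
  classical
  have hc : Fintype.card {i // v i = true} = Fintype.card {i // w i = true} := by
    rw [Fintype.card_subtype, Fintype.card_subtype]; exact h
  let e := Fintype.equivOfCardEq hc
  refine ⟨e.extendSubtype, fun i => ?_⟩
  by_cases hi : v i = true
  · rw [hi]; exact e.extendSubtype_mem i hi
  · have := e.extendSubtype_not_mem i hi
    simp only [Bool.not_eq_true] at hi this
    rw [hi, this]

theorem hammingWeight_comp_perm {n : ℕ} (x : Fin n → Bool) (σ : Equiv.Perm (Fin n)) :
    hammingWeight (fun i => x (σ i)) = hammingWeight x := by
  simp only [hammingWeight, Finset.card_filter]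
  exact Equiv.sum_comp σ fun i => if x i = true then 1 else 0

theorem dotProd_comp_perm {n : ℕ} (x w : Fin n → Bool) (σ : Equiv.Perm (Fin n)) :
    dotProd (fun i => x (σ i)) (fun i => w (σ i)) = dotProd x w := by
  simp only [dotProd, Finset.card_filter]
  exact Equiv.sum_comp σ fun i => if x i = true ∧ w i = true then 1 else 0

theorem fourierCoeff_eq_of_hammingWeight_eq {n : ℕ} {f : (Fin n → Bool) → Bool}
    (hf : ∀ x y, hammingWeight x = hammingWeight y → f x = f y) {v w : Fin n → Bool}
    (h : hammingWeight v = hammingWeight w) : fourierCoeff f v = fourierCoeff f w := by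
  obtain ⟨σ, hσ⟩ := exists_perm_of_hammingWeight_eq h
  have hv : v = fun i => w (σ i) := funext fun i => (hσ i).symm
  unfold fourierCoeff
  congr 1
  let e : (Fin n → Bool) ≃ (Fin n → Bool) := σ.symm.arrowCongr (Equiv.refl Bool)
  rw [← e.sum_comp]
  refine Finset.sum_congr rfl fun x _ => ?_
  have he : e x = fun i => x (σ i) := by
    funext i; simp [e, Equiv.arrowCongr]
  rw [he, hv, dotProd_comp_perm, hf _ _ (hammingWeight_comp_perm x σ)]

theorem choose_le_card_hammingWeight_eq (n k : ℕ) :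
    n.choose k ≤ (univ.filter fun w : Fin n → Bool => hammingWeight w = k).card := by
  classical
  have h : (powersetCard k (univ : Finset (Fin n))).card = n.choose k := by simp
  rw [← h]
  refine Finset.card_le_card_of_injOn (fun S i => decide (i ∈ S)) ?_ ?_
  · intro S hS
    have hS' := (mem_powersetCard.mp (mem_coe.mp hS)).2
    rw [mem_coe, mem_filter]
    simpa [hammingWeight] using hS'
  · intro S _ T _ hST
    ext i
    simpa using congrFun hST i

theorem choose_le_rank {n : ℕ} {f : (Fin n → Bool) → Bool}
    (hf : ∀ x y, hammingWeight x = hammingWeight y → f x = f y) {w : Fin n → Bool}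
    (hw : fourierCoeff f w ≠ 0) : n.choose (hammingWeight w) ≤ (xorMatrix f).rank := by
  refine (choose_le_card_hammingWeight_eq n _).trans
    (le_trans (Finset.card_le_card ?_) (card_support_le_rank f))
  intro v hv
  simp only [mem_filter, mem_univ, true_and] at hv ⊢
  rwa [fourierCoeff_eq_of_hammingWeight_eq hf hv]

/-! ### The alternating sum over paired coordinates -/

/-- Extension by `false` of a Boolean vector to all indices in `ℕ`. -/
def extend {n : ℕ} (w : Fin n → Bool) (i : ℕ) : Bool :=
  if h : i < n then w ⟨i, h⟩ else false

theorem extend_val {n : ℕ} (w : Fin n → Bool) (i : Fin n) : extend w i = w i := by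
  simp [extend]

/-- The input whose coordinates `2j` and `2j + 1`, for `j < q`, both record whether `j ∈ S`, and
whose next `a` coordinates are ones; the remaining coordinates are zeros. -/
def pairedInput (n q a : ℕ) (S : Finset ℕ) : Fin n → Bool := fun i =>
  if (i : ℕ) < 2 * q then decide ((i : ℕ) / 2 ∈ S) else decide ((i : ℕ) < 2 * q + a)

theorem prod_range_two_mul {M : Type*} [CommMonoid M] (g : ℕ → M) (q : ℕ) :
    ∏ i ∈ range (2 * q), g i = ∏ j ∈ range q, g (2 * j) * g (2 * j + 1) := by
  induction q with
  | zero => simp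
  | succ q ih =>
    rw [show 2 * (q + 1) = 2 * q + 1 + 1 by ring, prod_range_succ, prod_range_succ,
      prod_range_succ, ih, mul_assoc]

theorem sum_range_two_mul {M : Type*} [AddCommMonoid M] (g : ℕ → M) (q : ℕ) :
    ∑ i ∈ range (2 * q), g i = ∑ j ∈ range q, (g (2 * j) + g (2 * j + 1)) := by
  induction q with
  | zero => simp
  | succ q ih =>
    rw [show 2 * (q + 1) = 2 * q + 1 + 1 by ring, sum_range_succ, sum_range_succ,
      sum_range_succ, ih, add_assoc]

theorem hammingWeight_pairedInput {n q a : ℕ} (h : 2 * q + a ≤ n) {S : Finset ℕ}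
    (hS : S ⊆ range q) : hammingWeight (pairedInput n q a S) = 2 * S.card + a := by
  obtain ⟨r, rfl⟩ := Nat.exists_eq_add_of_le h
  have h0 : hammingWeight (pairedInput (2 * q + a + r) q a S)
      = ∑ i ∈ range (2 * q + a + r), if (if i < 2 * q then decide (i / 2 ∈ S)
          else decide (i < 2 * q + a)) = true then 1 else 0 := by
    rw [hammingWeight, Finset.card_filter, Finset.sum_range]
    rfl
  have h1 : ∀ j ∈ range q, (if (if 2 * j < 2 * q then decide (2 * j / 2 ∈ S)
          else decide (2 * j < 2 * q + a)) = true then 1 else 0)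
        + (if (if 2 * j + 1 < 2 * q then decide ((2 * j + 1) / 2 ∈ S)
          else decide (2 * j + 1 < 2 * q + a)) = true then 1 else 0)
        = if j ∈ S then 2 else 0 := by
    intro j hj
    have hj' := mem_range.mp hj
    rw [if_pos (by omega : 2 * j < 2 * q), if_pos (by omega : 2 * j + 1 < 2 * q),
      show 2 * j / 2 = j by omega, show (2 * j + 1) / 2 = j by omega]
    by_cases hjS : j ∈ S <;> simp [hjS]
  rw [h0, sum_range_add, sum_range_add, sum_range_two_mul, sum_congr rfl h1]
  have h2 : (∑ j ∈ range q, if j ∈ S then 2 else 0) = 2 * S.card := by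
    rw [Finset.sum_ite_mem, Finset.inter_eq_right.mpr hS, sum_const, smul_eq_mul, mul_comm]
  rw [h2]
  have h3 : ∀ i ∈ range a, (if (if 2 * q + i < 2 * q then decide ((2 * q + i) / 2 ∈ S)
      else decide (2 * q + i < 2 * q + a)) = true then 1 else 0) = 1 := by
    intro i hi
    simpa using hi
  have h4 : ∀ i ∈ range r, (if (if 2 * q + a + i < 2 * q then decide ((2 * q + a + i) / 2 ∈ S)
      else decide (2 * q + a + i < 2 * q + a)) = true then 1 else 0) = 0 := by
    intro i _
    rw [if_neg (by omega : ¬ 2 * q + a + i < 2 * q)]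
    simp
  rw [sum_congr rfl h3, sum_congr rfl h4]
  simp

/-- The sign contributed by the pair `2j, 2j + 1` to the character of `w` on a paired input. -/
noncomputable def pairSign {n : ℕ} (w : Fin n → Bool) (j : ℕ) : ℝ :=
  (if extend w (2 * j) = true then -1 else 1) * (if extend w (2 * j + 1) = true then -1 else 1)

theorem character_pairedInput {n q a : ℕ} (h : 2 * q + a ≤ n) (w : Fin n → Bool) :
    ∃ c : ℝ, ∀ S ⊆ range q,
      (-1 : ℝ) ^ dotProd (pairedInput n q a S) w = (∏ j ∈ S, pairSign w j) * c := by
  obtain ⟨r, hr⟩ := Nat.exists_eq_add_of_le (show 2 * q ≤ n by omega)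
  refine ⟨∏ i ∈ range r,
    if decide (2 * q + i < 2 * q + a) = true ∧ extend w (2 * q + i) = true then (-1 : ℝ) else 1,
    fun S hS => ?_⟩
  have h0 : (-1 : ℝ) ^ dotProd (pairedInput n q a S) w
      = ∏ i ∈ range n, if (if i < 2 * q then decide (i / 2 ∈ S)
          else decide (i < 2 * q + a)) = true ∧ extend w i = true then (-1 : ℝ) else 1 := by
    rw [neg_one_pow_dotProd, Finset.prod_range]
    simp only [extend_val]
    rfl
  rw [h0, congrArg range hr, prod_range_add, prod_range_two_mul]
  congr 1
  · have h1 : ∀ j ∈ range q, (if (if 2 * j < 2 * q then decide (2 * j / 2 ∈ S)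
          else decide (2 * j < 2 * q + a)) = true ∧ extend w (2 * j) = true then (-1 : ℝ) else 1)
        * (if (if 2 * j + 1 < 2 * q then decide ((2 * j + 1) / 2 ∈ S)
          else decide (2 * j + 1 < 2 * q + a)) = true ∧ extend w (2 * j + 1) = true
            then (-1 : ℝ) else 1)
        = if j ∈ S then pairSign w j else 1 := by
      intro j hj
      have hj' := mem_range.mp hj
      rw [if_pos (by omega : 2 * j < 2 * q), if_pos (by omega : 2 * j + 1 < 2 * q),
        show 2 * j / 2 = j by omega, show (2 * j + 1) / 2 = j by omega]
      by_cases hjS : j ∈ S <;> simp [hjS, pairSign]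
    rw [prod_congr rfl h1, Finset.prod_ite_mem, Finset.inter_eq_right.mpr hS]
  · refine prod_congr rfl fun i _ => ?_
    rw [if_neg (by omega : ¬ 2 * q + i < 2 * q)]

/-- The alternating sum annihilates every character that agrees on the two members of some pair. -/
theorem alternating_character_eq_zero {n q a : ℕ} (h : 2 * q + a ≤ n) (w : Fin n → Bool)
    (hw : ∃ j < q, extend w (2 * j) = extend w (2 * j + 1)) :
    ∑ S ∈ (range q).powerset,
      (-1 : ℝ) ^ S.card * (-1 : ℝ) ^ dotProd (pairedInput n q a S) w = 0 := by
  obtain ⟨c, hc⟩ := character_pairedInput h w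
  have h1 : ∀ S ∈ (range q).powerset,
      (-1 : ℝ) ^ S.card * (-1 : ℝ) ^ dotProd (pairedInput n q a S) w
        = (∏ j ∈ S, -pairSign w j) * c := by
    intro S hS
    rw [hc S (mem_powerset.mp hS), Finset.prod_neg, mul_assoc]
  rw [sum_congr rfl h1, ← Finset.sum_mul, ← Finset.prod_one_add]
  obtain ⟨j, hj, hjw⟩ := hw
  rw [Finset.prod_eq_zero (mem_range.mpr hj), zero_mul]
  rw [pairSign, hjw]
  split_ifs <;> norm_num

theorem hammingWeight_bounds_of_pairs {n q : ℕ} (h : 2 * q ≤ n) (w : Fin n → Bool)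
    (hw : ∀ j < q, extend w (2 * j) ≠ extend w (2 * j + 1)) :
    q ≤ hammingWeight w ∧ hammingWeight w + q ≤ n := by
  obtain ⟨r, hr⟩ := Nat.exists_eq_add_of_le h
  have h0 : hammingWeight w = ∑ i ∈ range n, if extend w i = true then 1 else 0 := by
    rw [hammingWeight, Finset.card_filter, Finset.sum_range]
    simp only [extend_val]
  have h1 : ∀ j ∈ range q, ((if extend w (2 * j) = true then 1 else 0)
      + if extend w (2 * j + 1) = true then 1 else 0) = 1 := by
    intro j hj
    have := hw j (mem_range.mp hj)
    revert this
    cases extend w (2 * j) <;> cases extend w (2 * j + 1) <;> simp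
  have h2 : (∑ i ∈ range r, if extend w (2 * q + i) = true then 1 else 0) ≤ r := by
    calc _ ≤ ∑ i ∈ range r, 1 := sum_le_sum fun i _ => by split_ifs <;> simp
      _ = r := by simp
  rw [h0, congrArg range hr, sum_range_add, sum_range_two_mul, sum_congr rfl h1]
  simp only [sum_const, card_range, smul_eq_mul, mul_one]
  omega

theorem alternating_sum_eq_zero {n q a : ℕ} (h : 2 * q + a ≤ n) (f : (Fin n → Bool) → Bool)
    (hf : ∀ w, q ≤ hammingWeight w → hammingWeight w + q ≤ n → fourierCoeff f w = 0) :
    ∑ S ∈ (range q).powerset,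
      (-1 : ℝ) ^ S.card * boolToReal (f (pairedInput n q a S)) = 0 := by
  simp only [fourier_inversion f, Finset.mul_sum]
  rw [Finset.sum_comm]
  refine Finset.sum_eq_zero fun w _ => ?_
  by_cases hw : ∃ j < q, extend w (2 * j) = extend w (2 * j + 1)
  · rw [← mul_zero (fourierCoeff f w), ← alternating_character_eq_zero h w hw, Finset.mul_sum]
    exact sum_congr rfl fun S _ => by ring
  · push Not at hw
    obtain ⟨h1, h2⟩ := hammingWeight_bounds_of_pairs (by omega) w hw
    simp [hf w h1 h2]

/-! ### Reduction modulo a prime -/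

theorem neg_one_pow_mul_choose_prime_sub_one {p : ℕ} (hp : p.Prime) (j : ℕ) (hj : j < p) :
    (-1 : ZMod p) ^ j * ((p - 1).choose j : ZMod p) = 1 := by
  induction j with
  | zero => simp
  | succ j ih =>
    have h1 := ih (by omega)
    have h2 : p.choose (j + 1) = (p - 1).choose j + (p - 1).choose (j + 1) := by
      obtain ⟨m, rfl⟩ := Nat.exists_eq_succ_of_ne_zero hp.ne_zero
      exact Nat.choose_succ_succ _ _
    have h3 : ((p.choose (j + 1) : ℕ) : ZMod p) = 0 :=
      (ZMod.natCast_eq_zero_iff _ _).mpr (hp.dvd_choose_self (by omega) hj)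
    rw [h2] at h3
    push_cast at h3
    rw [pow_succ]
    linear_combination h1 - (-1 : ZMod p) ^ j * h3

/-- A Boolean sequence whose alternating binomial sum of order `p - 1` vanishes is constant on the
`p` terms involved. -/
theorem constant_of_alternating_sum_eq_zero {p : ℕ} (hp : p.Prime) (ψ : ℕ → Bool)
    (h : ∑ j ∈ range p, (-1 : ℝ) ^ j * ((p - 1).choose j : ℝ) * boolToReal (ψ j) = 0)
    {i j : ℕ} (hi : i < p) (hj : j < p) : ψ i = ψ j := by
  have hZ : ∑ j ∈ range p, (-1 : ℤ) ^ j * ((p - 1).choose j : ℤ) * (if ψ j = true then 1 else 0)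
      = 0 := by
    have : ((∑ j ∈ range p, (-1 : ℤ) ^ j * ((p - 1).choose j : ℤ) *
        (if ψ j = true then 1 else 0) : ℤ) : ℝ) = 0 := by
      rw [← h]
      push_cast
      refine sum_congr rfl fun j _ => ?_
      rfl
    exact_mod_cast this
  have hmod : (((range p).filter fun j => ψ j = true).card : ZMod p) = 0 := by
    have := congrArg (Int.cast : ℤ → ZMod p) hZ
    push_cast at this
    rw [Finset.card_filter]
    push_cast
    refine Eq.trans ?_ this
    refine sum_congr rfl fun j hj => ?_
    rw [neg_one_pow_mul_choose_prime_sub_one hp j (mem_range.mp hj), one_mul]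
  have hdvd := (ZMod.natCast_eq_zero_iff _ _).mp hmod
  have hle : ((range p).filter fun j => ψ j = true).card ≤ p :=
    (card_filter_le _ _).trans (by simp)
  rcases Nat.eq_zero_or_pos ((range p).filter fun j => ψ j = true).card with h0 | h0
  · rw [Finset.card_eq_zero, Finset.filter_eq_empty_iff] at h0
    have h1 := h0 (mem_range.mpr hi)
    have h2 := h0 (mem_range.mpr hj)
    simp only [Bool.not_eq_true] at h1 h2
    rw [h1, h2]
  · have hp' : ((range p).filter fun j => ψ j = true).card = (range p).card := by
      rw [card_range]
      exact le_antisymm hle (Nat.le_of_dvd h0 hdvd)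
    rw [Finset.card_filter_eq_iff] at hp'
    rw [hp' i (mem_range.mpr hi), hp' j (mem_range.mpr hj)]

/-- The value of `f` on the input consisting of `k` ones followed by zeros. -/
def profile {n : ℕ} (f : (Fin n → Bool) → Bool) (k : ℕ) : Bool :=
  f fun i => decide ((i : ℕ) < k)

theorem hammingWeight_initial {n k : ℕ} (hk : k ≤ n) :
    hammingWeight (fun i : Fin n => decide ((i : ℕ) < k)) = k := by
  have := hammingWeight_pairedInput (n := n) (q := 0) (a := k) (S := ∅) (by omega) (by simp)
  have h0 : pairedInput n 0 k ∅ = fun i : Fin n => decide ((i : ℕ) < k) := by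
    funext i; simp [pairedInput]
  simpa [h0] using this

theorem hammingWeight_le {n : ℕ} (x : Fin n → Bool) : hammingWeight x ≤ n := by
  simpa [hammingWeight] using Finset.card_le_univ (univ.filter fun i => x i = true)

theorem eq_profile {n : ℕ} {f : (Fin n → Bool) → Bool}
    (hf : ∀ x y, hammingWeight x = hammingWeight y → f x = f y) (x : Fin n → Bool) :
    f x = profile f (hammingWeight x) :=
  hf _ _ (hammingWeight_initial (hammingWeight_le x)).symm

theorem profile_constant_on_progression {n p a : ℕ} (hp : p.Prime) (h : 2 * (p - 1) + a ≤ n)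
    {f : (Fin n → Bool) → Bool} (hs : ∀ x y, hammingWeight x = hammingWeight y → f x = f y)
    (hf : ∀ w, p - 1 ≤ hammingWeight w → hammingWeight w + (p - 1) ≤ n → fourierCoeff f w = 0)
    {i j : ℕ} (hi : i < p) (hj : j < p) :
    profile f (2 * i + a) = profile f (2 * j + a) := by
  refine constant_of_alternating_sum_eq_zero hp (fun j => profile f (2 * j + a)) ?_ hi hj
  have h0 := alternating_sum_eq_zero h f hf
  have h1 : ∀ S ∈ (range (p - 1)).powerset,
      (-1 : ℝ) ^ S.card * boolToReal (f (pairedInput n (p - 1) a S))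
        = (fun j => (-1 : ℝ) ^ j * boolToReal (profile f (2 * j + a))) S.card := by
    intro S hS
    rw [eq_profile hs, hammingWeight_pairedInput h (mem_powerset.mp hS)]
  rw [sum_congr rfl h1, Finset.sum_powerset_apply_card
      (fun j => (-1 : ℝ) ^ j * boolToReal (profile f (2 * j + a))), card_range,
    Nat.sub_add_cancel hp.one_le] at h0
  rw [← h0]
  refine sum_congr rfl fun j _ => ?_
  rw [nsmul_eq_mul]
  ring

/-- Vanishing of the middle Fourier coefficients forces a symmetric function to depend only on the
parity of the weight. -/
theorem profile_eq_parity {n p : ℕ} (hp : p.Prime) (h : 2 * (p - 1) + 1 ≤ n)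
    {f : (Fin n → Bool) → Bool} (hs : ∀ x y, hammingWeight x = hammingWeight y → f x = f y)
    (hf : ∀ w, p - 1 ≤ hammingWeight w → hammingWeight w + (p - 1) ≤ n → fourierCoeff f w = 0)
    (k : ℕ) (hk : k ≤ n) : profile f k = profile f (k % 2) := by
  have hp2 := hp.two_le
  induction k using Nat.strong_induction_on with
  | _ k ih =>
    rcases Nat.lt_or_ge k 2 with h2 | h2
    · rw [Nat.mod_eq_of_lt h2]
    · have h3 := ih (k - 2) (by omega) (by omega)
      have h4 : (k - 2) % 2 = k % 2 := by omega
      rw [← h4, ← h3]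
      -- A window `a, a + 2, …, a + 2(p-1)` inside `[0, n]` that contains both `k - 2` and `k`.
      obtain ⟨a, i, ha, hi, hk'⟩ : ∃ a i, 2 * (p - 1) + a ≤ n ∧ i + 1 < p ∧ k - 2 = 2 * i + a := by
        rcases Nat.lt_or_ge k (2 * p) with h5 | h5
        · exact ⟨k % 2, (k - 2) / 2, by omega, by omega, by omega⟩
        · exact ⟨k - 2 * (p - 1), p - 2, by omega, by omega, by omega⟩
      rw [hk', show k = 2 * (i + 1) + a by omega]
      exact profile_constant_on_progression hp ha hs hf hi (by omega)

/-! ### Binomial estimates -/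

theorem choose_le_choose_middle {n m k : ℕ} (h1 : m ≤ k) (h2 : k + m ≤ n) :
    n.choose m ≤ n.choose k := by
  have key : ∀ k, m ≤ k → 2 * k ≤ n → n.choose m ≤ n.choose k := by
    intro k hk
    induction k, hk using Nat.le_induction with
    | base => intro _; exact le_rfl
    | succ k _ ih =>
      intro h
      exact (ih (by omega)).trans (Nat.choose_le_succ_of_lt_half_left (by omega))
  rcases le_total (2 * k) n with h | h
  · exact key k h1 h
  · rw [← Nat.choose_symm (by omega : k ≤ n)]
    exact key (n - k) (by omega) (by omega)

theorem two_pow_le_choose {n m : ℕ} (h : 2 * m ≤ n) : 2 ^ m ≤ n.choose m := by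
  have h1 : 2 ^ m ≤ m.centralBinom := by
    induction m with
    | zero => simp
    | succ m ih =>
      have h2 := ih (by omega)
      have h3 := Nat.succ_mul_centralBinom_succ m
      have h4 : (m + 1) * 2 ^ (m + 1) ≤ (m + 1) * (m + 1).centralBinom := by
        rw [h3, pow_succ]
        nlinarith [Nat.zero_le (m * m.centralBinom)]
      exact Nat.le_of_mul_le_mul_left h4 (Nat.succ_pos m)
  exact h1.trans (Nat.choose_le_choose m h)

/-- For all sufficiently large `n`, every nontrivial symmetric Boolean
function on `{0,1}^n` has `rank(M_F) ≥ C(n, ⌈n/8⌉)`; in particular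
`rank(M_F) ≥ 2^{n/8}`. -/
theorem rank_xorMatrix_lower_bound :
    ∃ N : ℕ, ∀ n : ℕ, N ≤ n → ∀ f : (Fin n → Bool) → Bool,
      (∀ x y, hammingWeight x = hammingWeight y → f x = f y) →
      f ≠ (fun _ => false) →
      f ≠ (fun _ => true) →
      f ≠ (fun x => decide (hammingWeight x % 2 = 1)) →
      f ≠ (fun x => !decide (hammingWeight x % 2 = 1)) →
      n.choose ⌈(n : ℝ) / 8⌉₊ ≤ (xorMatrix f).rank ∧
        (2 : ℝ) ^ ((n : ℝ) / 8) ≤ ((xorMatrix f).rank : ℝ) := by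
  refine ⟨16, fun n hn f hs hf0 hf1 hf2 hf3 => ?_⟩
  set m := ⌈(n : ℝ) / 8⌉₊ with hm
  have hm1 : n ≤ 8 * m := by
    have h := Nat.le_ceil ((n : ℝ) / 8)
    rw [← hm, div_le_iff₀ (by norm_num)] at h
    have : (n : ℝ) ≤ ((8 * m : ℕ) : ℝ) := by push_cast; linarith
    exact_mod_cast this
  have hm2 : 8 * m < n + 8 := by
    have h := Nat.ceil_lt_add_one (show (0 : ℝ) ≤ (n : ℝ) / 8 by positivity)
    rw [← hm] at h
    have : ((8 * m : ℕ) : ℝ) < ((n + 8 : ℕ) : ℝ) := by push_cast; linarith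
    exact_mod_cast this
  have key : n.choose m ≤ (xorMatrix f).rank := by
    by_contra hlt
    have hvan : ∀ w, m ≤ hammingWeight w → hammingWeight w + m ≤ n → fourierCoeff f w = 0 := by
      intro w h1 h2
      by_contra hw
      exact hlt ((choose_le_choose_middle h1 h2).trans (choose_le_rank hs hw))
    obtain ⟨p, hp, hp1, hp2⟩ := Nat.exists_prime_lt_and_le_two_mul m (by omega)
    have hpar : ∀ x, f x = profile f (hammingWeight x % 2) := fun x => by
      rw [eq_profile hs]
      exact profile_eq_parity hp (by omega) hs
        (fun w h1 h2 => hvan w (by omega) (by omega)) _ (hammingWeight_le x)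
    -- The four value pairs at weights `0` and `1` are the four trivial functions.
    cases h0 : profile f 0 <;> cases h1 : profile f 1
    · refine hf0 (funext fun x => ?_)
      rw [hpar x]
      rcases Nat.mod_two_eq_zero_or_one (hammingWeight x) with h | h <;> simp [h, h0, h1]
    · refine hf2 (funext fun x => ?_)
      rw [hpar x]
      rcases Nat.mod_two_eq_zero_or_one (hammingWeight x) with h | h <;> simp [h, h0, h1]
    · refine hf3 (funext fun x => ?_)
      rw [hpar x]
      rcases Nat.mod_two_eq_zero_or_one (hammingWeight x) with h | h <;> simp [h, h0, h1]
    · refine hf1 (funext fun x => ?_)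
      rw [hpar x]
      rcases Nat.mod_two_eq_zero_or_one (hammingWeight x) with h | h <;> simp [h, h0, h1]
  refine ⟨key, ?_⟩
  calc (2 : ℝ) ^ ((n : ℝ) / 8) ≤ (2 : ℝ) ^ (m : ℝ) :=
        Real.rpow_le_rpow_of_exponent_le (by norm_num) (Nat.le_ceil _)
    _ = ((2 ^ m : ℕ) : ℝ) := by rw [Real.rpow_natCast]; norm_cast
    _ ≤ ((xorMatrix f).rank : ℝ) := by
        exact_mod_cast (two_pow_le_choose (by omega)).trans key

end SymXOR
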